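/- Suppose l′ = 1 and Λ′ = Λ_u is a fundamental weight. For p ∈ 𝒫(Λ_u,Λ″), the multipartition ♯λ := λ(♯p) ∈ 𝒴(♯Λ″,Λ_{−u}) is the single partition whose number of parts equal to k is, for each k > 0, the total number of length-k rows of λ(p); i.e., ♯λ is obtained by collecting together all the rows of the constituent partitions of λ(p). -/

import Mathlib

/-!
For a partition, `n`-regularity pins down each multiplicity by its residue modulo `n`; the proof
shows that both sides of the claim are smaller than `n` and congruent modulo `n`.

*Residues.* The restriction condition at level one says `p_k = η̂_k + Λ_{t_k}` for some
`t_k ∈ ℤ/n` (`exists_t`), hence `p_{k+1}` is the shift of `η̂_k` plus `Λ_{t_k}`. It follows that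
`♯p` has steps given by `Λ_{k - t_k}`, so the columns of `♯λ` satisfy `♯λ′_{k+1} ≡ t_k - u` and
its number of rows of length `k` is `t_{k-1} - t_k` modulo `n`. For `λ(p)` the residues of the
charged columns `y_j(k) = v_j - λ^{(j)′}_k` (`colW`) and those of `y(k+1)` differ by the exchange
of one entry, and summing them gives the same residue `t_{k-1} - t_k` for the total number of
rows of length `k`, which is `∑_j (y_j(k+1) - y_j(k))`.

*Bound.* Cylindricity says that each `y(k)` is a window `y_0 ≤ ⋯ ≤ y_{l-1} ≤ y_0 + n` of a
periodic increasing sequence. The difference of the counting functions of `y(k)` and `y(k+1)`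
(`cntDiff`) sums over a period to the number of rows of length `k`, by Hermite's identity, and
rises by at most one within a period because only one residue is exchanged. If the number of
rows were at least `n`, this difference would be positive everywhere (`cntDiff_pos`), so that the
rotation of `y(k)` would still be dominated by `y(k+1)` (`rotW_le`). Rotating all columns up to
the `k`-th keeps the path and produces a strictly higher lift, contradicting the choice of the
highest lift (`highest_lift_bound`). The bound applies both to `λ(p)` and to the one-component
`♯λ`, where two residues trivially differ by one exchange.
-/


open scoped BigOperators

namespace BF

/-- The fundamental weight `Λ_i`, viewed as the indicator function `ZMod n → ℤ` of `i`. -/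
def Lam (n : ℕ) (i : ZMod n) : ZMod n → ℤ := fun j => if j = i then 1 else 0

/-- A weight is dominant if all its coefficients are nonnegative. -/
def Dominant (n : ℕ) (a : ZMod n → ℤ) : Prop := ∀ i, 0 ≤ a i

/-- The step weight of `e : ZMod n → ℕ`: its `Λ_j`-coefficient is `e (j-1) - e j`. -/
def stepWt (n : ℕ) (e : ZMod n → ℕ) : ZMod n → ℤ := fun j => (e (j - 1) : ℤ) - (e j : ℤ)

/-- Membership in `A_l^+`: `d` is the step weight of some `e : ZMod n → ℕ` of total sum `l`. -/
def InA (n : ℕ) [NeZero n] (l : ℕ) (d : ZMod n → ℤ) : Prop :=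
  ∃ e : ZMod n → ℕ, (∑ i, e i) = l ∧ d = stepWt n e

/-- The ground-state path of the weight `Λ`: `p̄_k (i) = Λ (i - k)`,
which is the coefficient form of `p̄_k = Λ_{v₀+k} + ⋯ + Λ_{v_{l-1}+k}`. -/
def gsp (n : ℕ) (Λ : ZMod n → ℤ) (k : ℕ) : ZMod n → ℤ := fun i => Λ (i - (k : ZMod n))

/-- `p` is a `Λ`-path of level `l`. -/
def IsPath (n : ℕ) [NeZero n] (l : ℕ) (Λ : ZMod n → ℤ) (p : ℕ → ZMod n → ℤ) : Prop :=
  (∀ k, InA n l (fun i => p (k + 1) i - p k i)) ∧ ∃ K, ∀ k ≥ K, p k = gsp n Λ k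

/-- The length of a `Λ`-path: least `K` with `p k = p̄ k` for all `k ≥ K`. -/
noncomputable def pathLen (n : ℕ) (Λ : ZMod n → ℤ) (p : ℕ → ZMod n → ℤ) : ℕ :=
  sInf {K | ∀ k ≥ K, p k = gsp n Λ k}

/-- `f : ℕ → ℕ` is a partition (rows are indexed from `0`). -/
def IsPartitionF (f : ℕ → ℕ) : Prop := (∀ i, f (i + 1) ≤ f i) ∧ ∃ N, ∀ i ≥ N, f i = 0

/-- An `l`-multipartition. -/
def IsMP (l : ℕ) (lam : Fin l → ℕ → ℕ) : Prop := ∀ j, IsPartitionF (lam j)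

/-- The data `v : Fin l → ℕ` of a decomposition `Λ = Λ_{v 0} + ⋯ + Λ_{v (l-1)}`
with `0 ≤ v 0 ≤ ⋯ ≤ v (l-1) < n`. -/
def SortedV (n l : ℕ) (v : Fin l → ℕ) : Prop := Monotone v ∧ ∀ j, v j < n

/-- The weight `Λ = Λ_{v 0} + ⋯ + Λ_{v (l-1)}` determined by `v`. -/
def wtOf (n : ℕ) {l : ℕ} (v : Fin l → ℕ) : ZMod n → ℤ :=
  fun i => ((Finset.univ.filter fun j : Fin l => ((v j : ZMod n) = i)).card : ℤ)

/-- The colour of the node in (0-based) row `i`, (1-based) column `c` of component `j`: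
`(c - (i+1) + v j) mod n`. -/
def colour (n : ℕ) {l : ℕ} (v : Fin l → ℕ) (j : Fin l) (i c : ℕ) : ZMod n :=
  (c : ZMod n) - (i : ZMod n) - 1 + (v j : ZMod n)

/-- `N^r(λ)`: the total number of nodes of colour `r` in the multipartition `λ`. -/
noncomputable def Ncolour (n : ℕ) {l : ℕ} (v : Fin l → ℕ) (lam : Fin l → ℕ → ℕ)
    (r : ZMod n) : ℕ :=
  Nat.card {x : Fin l × ℕ × ℕ //
    1 ≤ x.2.2 ∧ x.2.2 ≤ lam x.1 x.2.1 ∧ colour n v x.1 x.2.1 x.2.2 = r}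

/-- The height `f′_m` of the `m`-th column of the partition `f`. -/
noncomputable def colHt (f : ℕ → ℕ) (m : ℕ) : ℕ := Nat.card {i : ℕ // m ≤ f i}

/-- The function `e` whose step weight is the `k`-th step of `π(λ)`:
`e i = #{j : v j + k - λ^{(j)′}_{k+1} ≡ i mod n}`. -/
noncomputable def eFun (n : ℕ) {l : ℕ} (v : Fin l → ℕ) (lam : Fin l → ℕ → ℕ) (k : ℕ) :
    ZMod n → ℕ :=
  fun i => Nat.card {j : Fin l //
    (v j : ZMod n) + (k : ZMod n) - (colHt (lam j) (k + 1) : ZMod n) = i}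

/-- `p = π(λ)` where `λ` is an `l`-multipartition of highest weight `wtOf n v`. -/
def IsPi (n : ℕ) {l : ℕ} (v : Fin l → ℕ) (lam : Fin l → ℕ → ℕ)
    (p : ℕ → ZMod n → ℤ) : Prop :=
  (∀ k, (fun i => p (k + 1) i - p k i) = stepWt n (eFun n v lam k)) ∧
  ∃ K, ∀ k ≥ K, p k = gsp n (wtOf n v) k

/-- `λ` is cylindrical of highest weight `Λ = wtOf n v`. -/
def Cylindrical (n : ℕ) {l : ℕ} (v : Fin l → ℕ) (lam : Fin l → ℕ → ℕ) : Prop :=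
  (∀ (j : ℕ) (hj : j + 1 < l) (i : ℕ),
      lam ⟨j + 1, hj⟩ (i + (v ⟨j + 1, hj⟩ - v ⟨j, Nat.lt_of_succ_lt hj⟩)) ≤
        lam ⟨j, Nat.lt_of_succ_lt hj⟩ i) ∧
  ∀ (hl : 0 < l) (i : ℕ),
      lam ⟨0, hl⟩ (i + (n + v ⟨0, hl⟩ - v ⟨l - 1, Nat.sub_lt hl Nat.one_pos⟩)) ≤
        lam ⟨l - 1, Nat.sub_lt hl Nat.one_pos⟩ i

/-- `λ` is higher than `μ`: every column of each component of `λ` is at most as high as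
the corresponding column of `μ`. -/
def Higher {l : ℕ} (lam mu : Fin l → ℕ → ℕ) : Prop :=
  ∀ (j : Fin l) (k : ℕ), 1 ≤ k → colHt (lam j) k ≤ colHt (mu j) k

/-- `λ` is the highest-lift of the path `p`: it is a cylindrical multipartition with
`π(λ) = p` which is higher than every cylindrical multipartition mapping to `p`. -/
def IsHL (n : ℕ) {l : ℕ} (v : Fin l → ℕ) (lam : Fin l → ℕ → ℕ)
    (p : ℕ → ZMod n → ℤ) : Prop :=
  IsMP l lam ∧ Cylindrical n v lam ∧ IsPi n v lam p ∧
    ∀ mu : Fin l → ℕ → ℕ, IsMP l mu → Cylindrical n v mu → IsPi n v mu p → Higher lam mu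

/-- `λ ∈ 𝒴(Λ)` with `Λ = wtOf n v`. -/
def InY (n : ℕ) {l : ℕ} (v : Fin l → ℕ) (lam : Fin l → ℕ → ℕ) : Prop :=
  ∃ p, IsHL n v lam p

/-- `α′_r = -Λ_{r-1} + 2Λ_r - Λ_{r+1}`. -/
def alphaP (n : ℕ) (r : ZMod n) : ZMod n → ℤ :=
  fun i => -(Lam n (r - 1) i) + 2 * Lam n r i - Lam n (r + 1) i

/-- `ψ_r(k)`: the number of length-`k` rows of `λ` whose right end has colour `r`. -/
noncomputable def psiCount (n : ℕ) {l : ℕ} (v : Fin l → ℕ) (lam : Fin l → ℕ → ℕ)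
    (k : ℕ) (r : ZMod n) : ℕ :=
  Nat.card {x : Fin l × ℕ // lam x.1 x.2 = k ∧ colour n v x.1 x.2 k = r}

/-- The number of length-`k` rows of `λ` whose left end has colour `r`. -/
noncomputable def leftCount (n : ℕ) {l : ℕ} (v : Fin l → ℕ) (lam : Fin l → ℕ → ℕ)
    (k : ℕ) (r : ZMod n) : ℕ :=
  Nat.card {x : Fin l × ℕ // lam x.1 x.2 = k ∧ colour n v x.1 x.2 1 = r}

/-- The total number of length-`k` rows of `λ`. -/
noncomputable def rowCount {l : ℕ} (lam : Fin l → ℕ → ℕ) (k : ℕ) : ℕ :=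
  Nat.card {x : Fin l × ℕ // lam x.1 x.2 = k}

/-- `m_r(k)`: the number of `r`-nodes of `λ` in column `k` or to its right. -/
noncomputable def mCount (n : ℕ) {l : ℕ} (v : Fin l → ℕ) (lam : Fin l → ℕ → ℕ)
    (k : ℕ) (r : ZMod n) : ℕ :=
  Nat.card {x : Fin l × ℕ × ℕ //
    k ≤ x.2.2 ∧ x.2.2 ≤ lam x.1 x.2.1 ∧ colour n v x.1 x.2.1 x.2.2 = r}

/-- `p` is a `(Λ′,Λ″)`-restricted path, where `l''` is the level of `Λ″`:
`p - Λ′ ∈ 𝒫(Λ″)` and `p_k - η̂_k` is dominant for all `k`. -/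
def IsRes (n : ℕ) [NeZero n] (l'' : ℕ) (L' L'' : ZMod n → ℤ) (p : ℕ → ZMod n → ℤ) : Prop :=
  IsPath n l'' L'' (fun k i => p k i - L' i) ∧
  ∀ k, ∃ e : ZMod n → ℕ, (∑ i, e i) = l'' ∧
    (fun i => p (k + 1) i - p k i) = stepWt n e ∧ ∀ i, (e i : ℤ) ≤ p k i

/-- The length of a restricted path: `ℓ(p) = ℓ(p - Λ′)`. -/
noncomputable def resLen (n : ℕ) (L' L'' : ZMod n → ℤ) (p : ℕ → ZMod n → ℤ) : ℕ :=
  sInf {K | ∀ k ≥ K, (fun i => p k i - L' i) = gsp n L'' k}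

/-- `♯Λ`. -/
def sharpWt (n : ℕ) (Λ : ZMod n → ℤ) : ZMod n → ℤ := fun i => Λ (-i)

/-- `♯p`: `(♯p)_k (i) = a_{k-i}(k)` where `p_k = ∑ a_i(k) Λ_i`. -/
def sharpPath (n : ℕ) (p : ℕ → ZMod n → ℤ) : ℕ → ZMod n → ℤ :=
  fun k i => p k ((k : ZMod n) - i)

/-- `θ(a) = 1` if `a ≥ 0`, `0` otherwise. -/
def theta (a : ℤ) : ℕ := if 0 ≤ a then 1 else 0

/-- The function counting the entries of `μ : Fin l → ℕ` in each class mod `n`. -/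
def cntF (n : ℕ) {l : ℕ} (μ : Fin l → ℕ) : ZMod n → ℕ :=
  fun i => (Finset.univ.filter fun j : Fin l => ((μ j : ZMod n) = i)).card

/-- The energy function `H` on `A_l^+ × A_l^+`:
`H(α,β) = min_{σ ∈ S_l} ∑_j θ(μ_j - ν_{σ(j)})` where `α`, `β` are the step weights of
`Λ_{μ_0} + ⋯ + Λ_{μ_{l-1}}`, `Λ_{ν_0} + ⋯ + Λ_{ν_{l-1}}` with `0 ≤ μ_j, ν_j < n`. -/
noncomputable def Hfun (n : ℕ) (l : ℕ) (d d' : ZMod n → ℤ) : ℕ :=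
  sInf {m | ∃ μ ν : Fin l → ℕ, (∀ j, μ j < n) ∧ (∀ j, ν j < n) ∧
    d = stepWt n (cntF n μ) ∧ d' = stepWt n (cntF n ν) ∧
    m = Finset.univ.inf' ⟨1, Finset.mem_univ 1⟩
      fun σ : Equiv.Perm (Fin l) => ∑ j, theta ((μ j : ℤ) - (ν (σ j) : ℤ))}

/-- `(j, i)` is a removable `r`-node of `λ` (node at the right end of 0-based row `i`
of component `j`). -/
def RemNode (n : ℕ) {l : ℕ} (v : Fin l → ℕ) (lam : Fin l → ℕ → ℕ) (r : ZMod n)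
    (j : Fin l) (i : ℕ) : Prop :=
  1 ≤ lam j i ∧ lam j (i + 1) < lam j i ∧ colour n v j i (lam j i) = r

/-- `(j, i)` is an addable `r`-node of `λ` (node addable at the end of 0-based row `i`
of component `j`). -/
def AddNode (n : ℕ) {l : ℕ} (v : Fin l → ℕ) (lam : Fin l → ℕ → ℕ) (r : ZMod n)
    (j : Fin l) (i : ℕ) : Prop :=
  (i = 0 ∨ lam j i < lam j (i - 1)) ∧ colour n v j i (lam j i + 1) = r

/-- The diagonal number `d = c - (i+1) + v j` of the addable/removable node
`x = (j, i, isRemovable)`. -/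
def nodeD {l : ℕ} (v : Fin l → ℕ) (lam : Fin l → ℕ → ℕ) (x : Fin l × ℕ × Bool) : ℤ :=
  (if x.2.2 then (lam x.1 x.2.1 : ℤ) else (lam x.1 x.2.1 : ℤ) + 1) - ((x.2.1 : ℤ) + 1) + (v x.1 : ℤ)

/-- The total order on addable/removable nodes: `(d,j) < (d',j')` iff `d < d'`, or
`d = d'` and `j > j'`. -/
def nodeLT {l : ℕ} (v : Fin l → ℕ) (lam : Fin l → ℕ → ℕ) (x y : Fin l × ℕ × Bool) : Prop :=
  nodeD v lam x < nodeD v lam y ∨ (nodeD v lam x = nodeD v lam y ∧ (y.1 : ℕ) < (x.1 : ℕ))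

/-- `L` is the `r`-signature of `λ`: the increasing list of all addable and removable
`r`-nodes (flag `true` = removable, `false` = addable). -/
def IsSig (n : ℕ) {l : ℕ} (v : Fin l → ℕ) (lam : Fin l → ℕ → ℕ) (r : ZMod n)
    (L : List (Fin l × ℕ × Bool)) : Prop :=
  L.Pairwise (nodeLT v lam) ∧
  ∀ x : Fin l × ℕ × Bool, x ∈ L ↔
    ((x.2.2 = true ∧ RemNode n v lam r x.1 x.2.1) ∨
      (x.2.2 = false ∧ AddNode n v lam r x.1 x.2.1))

/-- One step of the reduction procedure on signature words: delete an adjacent pair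
consisting of a removable node (`true`) immediately followed by an addable node (`false`). -/
inductive SigStep : List Bool → List Bool → Prop
  | pair (l₁ l₂ : List Bool) : SigStep (l₁ ++ true :: false :: l₂) (l₁ ++ l₂)


/-- The number of entries of `y` in the residue class `i` modulo `n`, as an integer. -/
def resCount (n : ℕ) {l : ℕ} (y : Fin l → ℤ) (i : ZMod n) : ℤ :=
  ∑ j, if ((y j : ℤ) : ZMod n) = i then 1 else 0

/-- The window condition `y 0 ≤ y 1 ≤ ⋯ ≤ y (l-1) ≤ y 0 + n`: the extension of `y` to `ℤ` by
`y (j + l) = y j + n` is weakly increasing. -/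
def CylWindow (n : ℕ) {l : ℕ} (y : Fin l → ℤ) : Prop :=
  (∀ (j : ℕ) (hj : j + 1 < l), y ⟨j, Nat.lt_of_succ_lt hj⟩ ≤ y ⟨j + 1, hj⟩) ∧
  ∀ hl : 0 < l, y ⟨l - 1, Nat.sub_lt hl Nat.one_pos⟩ ≤ y ⟨0, hl⟩ + n

/-- The rotation `(y 0, …, y (l-1)) ↦ (y 1, …, y (l-1), y 0 + n)`. -/
def rotW (n : ℕ) {l : ℕ} (y : Fin l → ℤ) (j : Fin l) : ℤ :=
  if h : (j : ℕ) + 1 < l then y ⟨j + 1, h⟩ else y ⟨0, j.pos⟩ + n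

/-- The charged column heights `v j - λ^{(j)′}_m` of a multipartition. -/
noncomputable def colW {l : ℕ} (v : Fin l → ℕ) (lam : Fin l → ℕ → ℕ) (m : ℕ) (j : Fin l) : ℤ :=
  (v j : ℤ) - (colHt (lam j) m : ℤ)

/-! ### Integer windows and their counting functions -/

lemma ediv_succ_sub (n : ℕ) [NeZero n] (x : ℤ) :
    (x + 1) / (n : ℤ) - x / (n : ℤ) = if (n : ℤ) ∣ x + 1 then 1 else 0 := by
  have hn : (0 : ℤ) < n := by exact_mod_cast NeZero.pos n
  have h1 := Int.mul_ediv_add_emod x n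
  have h2 := Int.emod_nonneg x hn.ne'
  have h3 := Int.emod_lt_of_pos x hn
  set q := x / (n : ℤ)
  set r := x % (n : ℤ)
  split_ifs with h
  · obtain ⟨c, hc⟩ := h
    rw [hc, Int.mul_ediv_cancel_left _ hn.ne']
    have h4 : (n : ℤ) * (c - q) = r + 1 := by rw [mul_sub]; linarith
    have h5 : 0 < c - q := by
      by_contra h6
      nlinarith
    nlinarith
  · have h4 : r + 1 ≠ n := by
      intro h5
      exact h ⟨q + 1, by rw [mul_add]; linarith⟩
    have h5 : (x + 1) / (n : ℤ) = q := by
      rw [Int.ediv_eq_iff_of_pos hn]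
      constructor
      · nlinarith
      · have : r + 1 < n := lt_of_le_of_ne (by omega) h4
        nlinarith
    omega

/-- Hermite's identity in integral form. -/
lemma sum_range_ediv (n : ℕ) [NeZero n] (x : ℤ) :
    ∑ s ∈ Finset.range n, (x + s) / (n : ℤ) = x := by
  have hn : (0 : ℤ) < n := by exact_mod_cast NeZero.pos n
  have step : ∀ x : ℤ, ∑ s ∈ Finset.range n, (x + 1 + s) / (n : ℤ) =
      ∑ s ∈ Finset.range n, (x + s) / (n : ℤ) + 1 := by
    intro x
    have h1 := Finset.sum_range_succ (fun s : ℕ => (x + s) / (n : ℤ)) n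
    have h2 := Finset.sum_range_succ' (fun s : ℕ => (x + s) / (n : ℤ)) n
    have h3 : (x + n) / (n : ℤ) = x / n + 1 := Int.add_ediv_of_dvd_right (dvd_refl _) |>.trans
      (by rw [Int.ediv_self hn.ne'])
    simp only [Nat.cast_add, Nat.cast_one, Nat.cast_zero, add_zero] at h1 h2
    have h4 : ∑ s ∈ Finset.range n, (x + 1 + s) / (n : ℤ) =
        ∑ s ∈ Finset.range n, (x + (s + 1)) / (n : ℤ) :=
      Finset.sum_congr rfl fun s _ => by rw [add_assoc, add_comm (1 : ℤ)]
    rw [h4]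
    linarith
  induction x using Int.induction_on with
  | zero =>
    refine Finset.sum_eq_zero fun s hs => ?_
    rw [zero_add]
    exact Int.ediv_eq_zero_of_lt (by positivity) (by exact_mod_cast Finset.mem_range.1 hs)
  | succ i ih => rw [step, ih]
  | pred i ih =>
    have := step (-(i : ℤ) - 1)
    rw [sub_add_cancel, ih] at this
    linarith

/-- The difference of the counting functions of the windows `y'` and `y`: for the periodic
extensions, the number of entries of `y'` at most `t` exceeds that of `y` by `cntDiff n y' y t`. -/
def cntDiff (n : ℕ) {l : ℕ} (y' y : Fin l → ℤ) (t : ℤ) : ℤ :=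
  ∑ j, ((t - y' j) / (n : ℤ) - (t - y j) / (n : ℤ))

lemma cntDiff_succ (n : ℕ) [NeZero n] {l : ℕ} (y' y : Fin l → ℤ) (t : ℤ) :
    cntDiff n y' y (t + 1) - cntDiff n y' y t =
      resCount n y' ((t + 1 : ℤ) : ZMod n) - resCount n y ((t + 1 : ℤ) : ZMod n) := by
  have key : ∀ z : ℤ, (t + 1 - z) / (n : ℤ) - (t - z) / (n : ℤ) =
      if ((z : ℤ) : ZMod n) = ((t + 1 : ℤ) : ZMod n) then 1 else 0 := by
    intro z
    have h := ediv_succ_sub n (t - z)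
    rw [show t - z + 1 = t + 1 - z by ring] at h
    rw [h]
    simp only [ZMod.intCast_eq_intCast_iff_dvd_sub]
  unfold cntDiff resCount
  rw [← Finset.sum_sub_distrib, ← Finset.sum_sub_distrib]
  refine Finset.sum_congr rfl fun j _ => ?_
  rw [← key (y' j), ← key (y j)]
  ring

lemma sum_cntDiff (n : ℕ) [NeZero n] {l : ℕ} (y' y : Fin l → ℤ) (t : ℤ) :
    ∑ s ∈ Finset.range n, cntDiff n y' y (t + s) = ∑ j, (y j - y' j) := by
  unfold cntDiff
  rw [Finset.sum_comm]
  refine Finset.sum_congr rfl fun j _ => ?_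
  rw [Finset.sum_sub_distrib]
  have h : ∀ z : ℤ, ∑ s ∈ Finset.range n, (t + s - z) / (n : ℤ) = t - z := by
    intro z
    rw [← sum_range_ediv n (t - z)]
    exact Finset.sum_congr rfl fun s _ => by congr 1; ring
  rw [h, h]
  ring

/-- If the residues of `y'` and `y` differ by the exchange of a single entry, then
`cntDiff` rises by at most one along a period, so it is positive as soon as its total over a
period is at least `n`. -/
lemma cntDiff_pos (n : ℕ) [NeZero n] {l : ℕ} (y' y : Fin l → ℤ) (a b : ZMod n)
    (H : ∀ i, resCount n y' i + Lam n a i = resCount n y i + Lam n b i)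
    (hsum : (n : ℤ) ≤ ∑ j, (y j - y' j)) (t : ℤ) : 1 ≤ cntDiff n y' y t := by
  by_contra hcon
  have hstep : ∀ x : ℤ, cntDiff n y' y (x + 1) ≤
      cntDiff n y' y x + if ((x + 1 : ℤ) : ZMod n) = b then 1 else 0 := by
    intro x
    have h1 := cntDiff_succ n y' y x
    have h2 := H ((x + 1 : ℤ) : ZMod n)
    have h3 : 0 ≤ Lam n a ((x + 1 : ℤ) : ZMod n) := by unfold Lam; split_ifs <;> simp
    have h4 : Lam n b ((x + 1 : ℤ) : ZMod n) = if ((x + 1 : ℤ) : ZMod n) = b then 1 else 0 := rfl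
    linarith
  have hacc : ∀ s : ℕ, cntDiff n y' y (t + s) ≤ cntDiff n y' y t +
      ∑ r ∈ Finset.range s, if ((t + r + 1 : ℤ) : ZMod n) = b then 1 else 0 := by
    intro s
    induction s with
    | zero => simp
    | succ s ih =>
      rw [Finset.sum_range_succ]
      have := hstep (t + s)
      rw [show t + ((s + 1 : ℕ) : ℤ) = t + s + 1 by push_cast; ring]
      linarith
  -- `t + 1, …, t + s` with `s < n` meets each residue class at most once
  have hone : ∀ s < n, (∑ r ∈ Finset.range s,
      if ((t + r + 1 : ℤ) : ZMod n) = b then (1 : ℤ) else 0) ≤ 1 := by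
    intro s hs
    rw [Finset.sum_boole]
    norm_cast
    rw [Finset.card_le_one]
    intro r hr r' hr'
    simp only [Finset.mem_filter, Finset.mem_range] at hr hr'
    have h1 := hr.2.trans hr'.2.symm
    push_cast at h1
    have h2 : ((r : ℕ) : ZMod n) = ((r' : ℕ) : ZMod n) := by
      simpa using h1
    have h3 := (ZMod.natCast_eq_natCast_iff' r r' n).1 h2
    rwa [Nat.mod_eq_of_lt (by omega), Nat.mod_eq_of_lt (by omega)] at h3
  have hlt : ∑ s ∈ Finset.range n, cntDiff n y' y (t + s) < ∑ s ∈ Finset.range n, (1 : ℤ) := by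
    refine Finset.sum_lt_sum (fun s hs => ?_) ⟨0, Finset.mem_range.2 (NeZero.pos n), ?_⟩
    · have := hacc s
      have := hone s (Finset.mem_range.1 hs)
      linarith
    · simpa using hcon
  rw [sum_cntDiff] at hlt
  simp at hlt
  simp at hsum
  linarith

lemma CylWindow.mono {n l : ℕ} {y : Fin l → ℤ} (h : CylWindow n y) : Monotone y := by
  cases l with
  | zero => intro a; exact a.elim0
  | succ l =>
    rw [Fin.monotone_iff_le_succ]
    intro i
    exact h.1 i (by omega)

lemma CylWindow.le_add {n l : ℕ} {y : Fin l → ℤ} (h : CylWindow n y) (i j : Fin l) :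
    y i ≤ y j + n := by
  have h1 := h.2 i.pos
  have h2 : y i ≤ y ⟨l - 1, Nat.sub_lt i.pos Nat.one_pos⟩ := h.mono (by
    rw [Fin.le_def]; simp only; omega)
  have h3 : y ⟨0, i.pos⟩ ≤ y j := h.mono (by rw [Fin.le_def]; simp)
  linarith

/-- A positive counting difference leaves room for a rotation of the lower window. -/
lemma rotW_le (n : ℕ) [NeZero n] {l : ℕ} {y' y : Fin l → ℤ} (hy' : CylWindow n y')
    (hy : CylWindow n y) (hD : ∀ t, 1 ≤ cntDiff n y' y t) (j : Fin l) :
    rotW n y' j ≤ y j := by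
  have hn : (0 : ℤ) < n := by exact_mod_cast NeZero.pos n
  by_contra hcon
  push Not at hcon
  have hD := hD (y j)
  -- at `t = y j`, the quotients of `y` are at least, and those of `y'` at most,
  -- `0` up to index `j` and `-1` beyond it
  have hle : cntDiff n y' y (y j) ≤ 0 := by
    refine Finset.sum_nonpos fun i _ => ?_
    by_cases hij : i ≤ j
    · have h1 : 0 ≤ (y j - y i) / (n : ℤ) :=
        Int.ediv_nonneg (by have := hy.mono hij; linarith) hn.le
      have h2 : (y j - y' i) / (n : ℤ) < 1 := by
        rw [Int.ediv_lt_iff_lt_mul hn]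
        unfold rotW at hcon
        split_ifs at hcon with h
        · have := hy'.le_add ⟨j + 1, h⟩ i
          linarith
        · have : y' ⟨0, j.pos⟩ ≤ y' i := hy'.mono (by rw [Fin.le_def]; simp)
          linarith
      omega
    · have hji : (j : ℕ) + 1 ≤ i := by
        rw [Fin.le_def] at hij; omega
      have h1 : -1 ≤ (y j - y i) / (n : ℤ) := by
        rw [Int.le_ediv_iff_mul_le hn]
        have := hy.le_add i j
        linarith
      have h2 : (y j - y' i) / (n : ℤ) < 0 := by
        rw [Int.ediv_lt_iff_lt_mul hn]
        unfold rotW at hcon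
        rw [dif_pos (by omega)] at hcon
        have : y' ⟨j + 1, by omega⟩ ≤ y' i := hy'.mono (by rw [Fin.le_def]; exact hji)
        linarith
      omega
  omega

lemma rotW_mono (n : ℕ) {l : ℕ} {y z : Fin l → ℤ} (h : ∀ j, y j ≤ z j) (j : Fin l) :
    rotW n y j ≤ rotW n z j := by
  unfold rotW
  split_ifs
  · exact h _
  · linarith [h ⟨0, j.pos⟩]

lemma rotW_cyl (n : ℕ) {l : ℕ} {y : Fin l → ℤ} (h : CylWindow n y) :
    CylWindow n (rotW n y) := by
  refine ⟨fun j hj => ?_, fun hl => ?_⟩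
  · unfold rotW
    rw [dif_pos hj]
    split_ifs with h1
    · exact h.1 _ h1
    · exact h.le_add _ _
  · have h0 : y ⟨0, hl⟩ ≤ rotW n y ⟨0, hl⟩ := by
      unfold rotW
      split_ifs with h1
      · exact h.1 0 h1
      · simp
    have h1 : rotW n y ⟨l - 1, Nat.sub_lt hl Nat.one_pos⟩ = y ⟨0, hl⟩ + n := by
      unfold rotW
      rw [dif_neg]
      simp only
      omega
    rw [h1]
    linarith

lemma rotW_eq (n : ℕ) {l : ℕ} (y : Fin (l + 1) → ℤ) (j : Fin (l + 1)) :
    rotW n y j = y (finRotate (l + 1) j) + if j = Fin.last l then (n : ℤ) else 0 := by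
  unfold rotW
  split_ifs with h1 h2 h2
  · subst h2; simp at h1
  · rw [finRotate_of_lt (by omega)]; simp
  · subst h2
    rw [finRotate_last]; rfl
  · exact absurd (by rw [Fin.ext_iff]; simp; omega) h2

lemma sum_rotW (n : ℕ) {l : ℕ} (hl : 0 < l) (y : Fin l → ℤ) :
    ∑ j, rotW n y j = ∑ j, y j + n := by
  obtain ⟨l, rfl⟩ : ∃ k, l = k + 1 := ⟨l - 1, by omega⟩
  simp only [rotW_eq, Finset.sum_add_distrib]
  rw [Equiv.sum_comp (finRotate (l + 1)) y]
  simp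

lemma resCount_rotW (n : ℕ) {l : ℕ} (y : Fin l → ℤ) (i : ZMod n) :
    resCount n (rotW n y) i = resCount n y i := by
  cases l with
  | zero => simp [resCount]
  | succ l =>
    unfold resCount
    rw [← Equiv.sum_comp (finRotate (l + 1))
      (fun j => if ((y j : ℤ) : ZMod n) = i then (1 : ℤ) else 0)]
    refine Finset.sum_congr rfl fun j _ => ?_
    rw [rotW_eq]
    congr 2
    split_ifs <;> simp

lemma sum_mul_resCount (n : ℕ) [NeZero n] {l : ℕ} (y : Fin l → ℤ) :
    ∑ i : ZMod n, ((resCount n y i : ℤ) : ZMod n) * i = ((∑ j, y j : ℤ) : ZMod n) := by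
  unfold resCount
  push_cast
  simp only [Finset.sum_mul]
  rw [Finset.sum_comm]
  simp

/-! ### Columns of multipartitions -/

lemma le_iff_lt_colHt {f : ℕ → ℕ} (hf : IsPartitionF f) {m : ℕ} (hm : 1 ≤ m) (i : ℕ) :
    m ≤ f i ↔ i < colHt f m := by
  have hanti : Antitone f := antitone_nat_of_succ_le hf.1
  have hex : ∃ N, f N < m := by
    obtain ⟨N, hN⟩ := hf.2
    exact ⟨N, by rw [hN N le_rfl]; omega⟩
  classical
  have hset : ∀ i, m ≤ f i ↔ i < Nat.find hex := by
    intro i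
    constructor
    · intro h
      by_contra h1
      have h2 := Nat.find_spec hex
      have h3 := hanti (not_lt.1 h1)
      omega
    · intro h
      exact not_lt.1 (Nat.find_min hex h)
  have : colHt f m = Nat.find hex := by
    unfold colHt
    simp only [hset, ← Finset.mem_range]
    rw [Nat.card_eq_fintype_card, Fintype.card_coe, Finset.card_range]
  rw [this, hset]

lemma colHt_eq_of_iff {f : ℕ → ℕ} {m c : ℕ} (h : ∀ i, m ≤ f i ↔ i < c) : colHt f m = c := by
  unfold colHt
  simp only [h, ← Finset.mem_range]
  rw [Nat.card_eq_fintype_card, Fintype.card_coe, Finset.card_range]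

lemma colHt_anti {f : ℕ → ℕ} (hf : IsPartitionF f) {m m' : ℕ} (hm : 1 ≤ m) (h : m ≤ m') :
    colHt f m' ≤ colHt f m := by
  by_contra hcon
  push Not at hcon
  have h1 := (le_iff_lt_colHt hf (hm.trans h) _).2 hcon
  have h2 := (le_iff_lt_colHt hf hm _).1 (h.trans h1)
  omega

lemma card_rows {f : ℕ → ℕ} (hf : IsPartitionF f) {k : ℕ} (hk : 1 ≤ k) :
    Finite {i // f i = k} ∧
      (Nat.card {i // f i = k} : ℤ) = (colHt f k : ℤ) - colHt f (k + 1) := by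
  have h : ∀ i, f i = k ↔ i ∈ Finset.Ico (colHt f (k + 1)) (colHt f k) := by
    intro i
    rw [Finset.mem_Ico, ← le_iff_lt_colHt hf hk, ← not_lt,
      ← le_iff_lt_colHt hf (by omega : 1 ≤ k + 1)]
    omega
  simp only [h]
  refine ⟨inferInstance, ?_⟩
  rw [Nat.card_eq_fintype_card, Fintype.card_coe, Nat.card_Ico,
    Nat.cast_sub (colHt_anti hf hk (Nat.le_succ k))]

lemma card_all_rows {l : ℕ} {v : Fin l → ℕ} {lam : Fin l → ℕ → ℕ} (h : IsMP l lam) {k : ℕ}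
    (hk : 1 ≤ k) :
    (Nat.card {x : Fin l × ℕ // lam x.1 x.2 = k} : ℤ) =
      ∑ j, (colW v lam (k + 1) j - colW v lam k j) := by
  have e : {x : Fin l × ℕ // lam x.1 x.2 = k} ≃ Σ j : Fin l, {i : ℕ // lam j i = k} :=
    { toFun := fun x => ⟨x.1.1, x.1.2, x.2⟩
      invFun := fun x => ⟨(x.1, x.2.1), x.2.2⟩
      left_inv := fun _ => rfl
      right_inv := fun _ => rfl }
  have : ∀ j, Finite {i : ℕ // lam j i = k} := fun j => (card_rows (h j) hk).1
  rw [Nat.card_congr e, Nat.card_sigma]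
  push_cast
  refine Finset.sum_congr rfl fun j _ => ?_
  rw [(card_rows (h j) hk).2]
  unfold colW
  ring

/-- The partition with prescribed column heights. -/
lemma exists_partition (c : ℕ → ℕ) (hc : ∀ m, 1 ≤ m → c (m + 1) ≤ c m)
    (h0 : ∃ M, ∀ m ≥ M, c m = 0) :
    ∃ f, IsPartitionF f ∧ ∀ m, 1 ≤ m → colHt f m = c m := by
  classical
  obtain ⟨M, hM⟩ := h0
  have hanti : ∀ m m', 1 ≤ m → m ≤ m' → c m' ≤ c m := by
    intro m m' hm h
    induction m', h using Nat.le_induction with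
    | base => exact le_rfl
    | succ k hk ih => exact (hc k (hm.trans hk)).trans ih
  have hex : ∀ i, ∃ m, c (m + 1) ≤ i := fun i => ⟨M, by rw [hM _ (by omega)]; omega⟩
  have hiff : ∀ i m, 1 ≤ m → (m ≤ Nat.find (hex i) ↔ i < c m) := by
    intro i m hm
    constructor
    · intro h
      have := Nat.find_min (hex i) (m := m - 1) (by omega)
      rw [Nat.sub_add_cancel hm] at this
      omega
    · intro h
      by_contra h1
      have h2 := Nat.find_spec (hex i)
      have h3 := hanti _ _ (by omega) (show Nat.find (hex i) + 1 ≤ m by omega)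
      omega
  refine ⟨fun i => Nat.find (hex i), ⟨fun i => ?_, c 1, fun i hi => ?_⟩, fun m hm => ?_⟩
  · by_contra hcon
    push Not at hcon
    have h1 := (hiff (i + 1) (Nat.find (hex i) + 1) (by omega)).1 hcon
    have h2 := (hiff i (Nat.find (hex i) + 1) (by omega)).2 (by omega)
    omega
  · by_contra hcon
    have h1 := (hiff i 1 le_rfl).1 (Nat.one_le_iff_ne_zero.2 hcon)
    omega
  · exact colHt_eq_of_iff fun i => hiff i m hm

/-- Shifted domination of partitions, read off from the columns. -/
lemma shift_le_iff {f g : ℕ → ℕ} (hf : IsPartitionF f) (hg : IsPartitionF g) (d : ℕ) :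
    (∀ i, g (i + d) ≤ f i) ↔ ∀ m, 1 ≤ m → colHt g m ≤ colHt f m + d := by
  constructor
  · intro h m hm
    by_contra hcon
    push Not at hcon
    have h1 := (le_iff_lt_colHt hg hm _).2 hcon
    have h2 := (le_iff_lt_colHt hf hm _).1 (h1.trans (h _))
    omega
  · intro h i
    by_contra hcon
    push Not at hcon
    have h1 := (le_iff_lt_colHt hg (by omega : 1 ≤ f i + 1) _).1 hcon
    have h2 := h (f i + 1) (by omega)
    have h3 := (le_iff_lt_colHt hf (by omega : 1 ≤ f i + 1) i).2 (by omega)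
    omega

lemma cylindrical_iff {n l : ℕ} {v : Fin l → ℕ} (hv : SortedV n l v) {lam : Fin l → ℕ → ℕ}
    (h : IsMP l lam) :
    Cylindrical n v lam ↔ ∀ m, 1 ≤ m → CylWindow n (colW v lam m) := by
  have e1 : ∀ (j : ℕ) (hj : j + 1 < l), v ⟨j, Nat.lt_of_succ_lt hj⟩ ≤ v ⟨j + 1, hj⟩ :=
    fun j hj => hv.1 (by rw [Fin.le_def]; simp)
  have e2 := hv.2
  unfold Cylindrical CylWindow colW
  constructor
  · rintro ⟨h1, h2⟩ m hm
    refine ⟨fun j hj => ?_, fun hl => ?_⟩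
    · have h3 := (shift_le_iff (h _) (h _) _).1 (h1 j hj) m hm
      have := e1 j hj
      omega
    · have h3 := (shift_le_iff (h _) (h _) _).1 (h2 hl) m hm
      have := e2 ⟨l - 1, Nat.sub_lt hl Nat.one_pos⟩
      omega
  · intro H
    refine ⟨fun j hj => ?_, fun hl => ?_⟩
    · refine (shift_le_iff (h _) (h _) _).2 fun m hm => ?_
      have h3 := (H m hm).1 j hj
      have := e1 j hj
      omega
    · refine (shift_le_iff (h _) (h _) _).2 fun m hm => ?_
      have h3 := (H m hm).2 hl
      have := e2 ⟨l - 1, Nat.sub_lt hl Nat.one_pos⟩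
      omega

lemma eFun_eq (n : ℕ) {l : ℕ} (v : Fin l → ℕ) (lam : Fin l → ℕ → ℕ) (k : ℕ) (i : ZMod n) :
    (eFun n v lam k i : ℤ) = resCount n (colW v lam (k + 1)) (i - k) := by
  unfold eFun resCount colW
  rw [Finset.sum_boole, Nat.card_eq_fintype_card, Fintype.card_subtype]
  congr 2
  ext j
  simp only [Finset.mem_filter, Finset.mem_univ, true_and]
  push_cast
  constructor <;> intro h <;> linear_combination h

lemma colW_mono {l : ℕ} {v : Fin l → ℕ} {lam : Fin l → ℕ → ℕ} (h : IsMP l lam) {m m' : ℕ}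
    (hm : 1 ≤ m) (hmm : m ≤ m') (j : Fin l) : colW v lam m j ≤ colW v lam m' j := by
  have := colHt_anti (h j) hm hmm
  unfold colW
  omega

lemma colW_eventually {l : ℕ} {v : Fin l → ℕ} {lam : Fin l → ℕ → ℕ} (h : IsMP l lam)
    (j : Fin l) : ∃ M, ∀ m ≥ M, colW v lam m j = v j := by
  refine ⟨lam j 0 + 1, fun m hm => ?_⟩
  have : colHt (lam j) m = 0 := by
    by_contra hcon
    have := (le_iff_lt_colHt (h j) (by omega : 1 ≤ m) 0).2 (by omega)
    omega
  simp [colW, this]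

/-- A highest lift has fewer than `n` rows of length `k` whenever the `k`-th and `(k+1)`-st
charged columns differ, as residues, by the exchange of one entry. Otherwise the first `k`
columns can all be rotated, which gives a strictly higher lift of the same path. -/
lemma highest_lift_bound (n : ℕ) [NeZero n] {l : ℕ} {v : Fin l → ℕ} (hv : SortedV n l v)
    {lam : Fin l → ℕ → ℕ} {q : ℕ → ZMod n → ℤ} (hlam : IsHL n v lam q) {k : ℕ} (hk : 1 ≤ k)
    (a b : ZMod n)
    (H : ∀ i, resCount n (colW v lam k) i + Lam n a i =
      resCount n (colW v lam (k + 1)) i + Lam n b i) :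
    ∑ j, (colW v lam (k + 1) j - colW v lam k j) < n := by
  by_contra hcon
  push Not at hcon
  obtain ⟨hMP, hcyl, hpi, hhigh⟩ := hlam
  have hW := (cylindrical_iff hv hMP).1 hcyl
  have hrot : ∀ j, rotW n (colW v lam k) j ≤ colW v lam (k + 1) j :=
    rotW_le n (hW k hk) (hW (k + 1) (by omega)) (cntDiff_pos n _ _ a b H hcon)
  have hl : 0 < l := by
    rcases Nat.eq_zero_or_pos l with rfl | h
    · have := NeZero.pos n
      simp at hcon
      omega
    · exact h
  have hvle : ∀ m j, colW v lam m j ≤ v j := fun m j => by unfold colW; omega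
  let Y : ℕ → Fin l → ℤ := fun m => if m ≤ k then rotW n (colW v lam m) else colW v lam m
  have hYlow : ∀ m ≤ k, Y m = rotW n (colW v lam m) := fun m hm => if_pos hm
  have hYhigh : ∀ m, k < m → Y m = colW v lam m := fun m hm => if_neg (by omega)
  have hYstep : ∀ m, 1 ≤ m → ∀ j, Y m j ≤ Y (m + 1) j := by
    intro m hm j
    rcases lt_trichotomy m k with h | h | h
    · rw [hYlow m h.le, hYlow (m + 1) h]
      exact rotW_mono n (colW_mono hMP hm (Nat.le_succ m)) j
    · subst h
      rw [hYlow m le_rfl, hYhigh (m + 1) (by omega)]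
      exact hrot j
    · rw [hYhigh m h, hYhigh (m + 1) (by omega)]
      exact colW_mono hMP hm (Nat.le_succ m) j
  have hYle : ∀ m, 1 ≤ m → ∀ j, Y m j ≤ v j := by
    intro m hm j
    rcases le_or_gt m k with h | h
    · rw [hYlow m h]
      exact (rotW_mono n (colW_mono hMP hm h) j).trans ((hrot j).trans (hvle _ j))
    · rw [hYhigh m h]; exact hvle m j
  have hex : ∀ j, ∃ f, IsPartitionF f ∧ ∀ m, 1 ≤ m → colHt f m = ((v j : ℤ) - Y m j).toNat := by
    intro j
    refine exists_partition _ (fun m hm => ?_) ?_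
    · have := hYstep m hm j
      omega
    · obtain ⟨M, hM⟩ := colW_eventually (v := v) hMP j
      refine ⟨M + k + 1, fun m hm => ?_⟩
      rw [hYhigh m (by omega), hM m (by omega)]
      simp
  choose mu hmuP hmuC using hex
  have hmuW : ∀ m, 1 ≤ m → colW v mu m = Y m := by
    intro m hm
    funext j
    have := hYle m hm j
    unfold colW
    rw [hmuC j m hm]
    omega
  have hmuCyl : Cylindrical n v mu := by
    rw [cylindrical_iff hv hmuP]
    intro m hm
    rw [hmuW m hm]
    rcases le_or_gt m k with h | h
    · rw [hYlow m h]; exact rotW_cyl n (hW m hm)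
    · rw [hYhigh m h]; exact hW m hm
  have hmuE : ∀ m, eFun n v mu m = eFun n v lam m := by
    intro m
    funext i
    have h1 := eFun_eq n v mu m i
    rw [hmuW (m + 1) (by omega)] at h1
    have h2 := eFun_eq n v lam m i
    have h3 : resCount n (Y (m + 1)) (i - m) = resCount n (colW v lam (m + 1)) (i - m) := by
      rcases le_or_gt (m + 1) k with h | h
      · rw [hYlow _ h, resCount_rotW]
      · rw [hYhigh _ h]
    omega
  have hmuPi : IsPi n v mu q := ⟨fun m => by rw [hmuE, hpi.1 m], hpi.2⟩
  have hH := hhigh mu hmuP hmuCyl hmuPi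
  have hle : ∑ j, rotW n (colW v lam k) j ≤ ∑ j, colW v lam k j := by
    refine Finset.sum_le_sum fun j _ => ?_
    rw [← hYlow k le_rfl, ← hmuW k hk]
    have := hH j k hk
    unfold colW
    omega
  rw [sum_rotW n hl] at hle
  have := NeZero.pos n
  omega

/-! ### Steps of restricted paths -/

lemma sum_eFun (n : ℕ) [NeZero n] {l : ℕ} (v : Fin l → ℕ) (lam : Fin l → ℕ → ℕ) (k : ℕ) :
    ∑ i, eFun n v lam k i = l := by
  unfold eFun
  simp only [Nat.card_eq_fintype_card, Fintype.card_subtype]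
  rw [← Finset.card_eq_sum_card_fiberwise (f := fun j : Fin l =>
    (v j : ZMod n) + (k : ZMod n) - (colHt (lam j) (k + 1) : ZMod n)) (s := Finset.univ)
    (t := Finset.univ) (by intro x _; simp)]
  simp

/-- A step weight and the total of `e` determine `e`. -/
lemma stepWt_inj (n : ℕ) [NeZero n] {e e' : ZMod n → ℕ} (hs : ∑ i, e i = ∑ i, e' i)
    (h : stepWt n e = stepWt n e') : e = e' := by
  have h1 : ∀ i, (e (i + 1) : ℤ) - e' (i + 1) = (e i : ℤ) - e' i := by
    intro i
    have := congrFun h (i + 1)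
    simp only [stepWt, add_sub_cancel_right] at this
    linarith
  have h2 : ∀ m : ℕ, (e (m : ZMod n) : ℤ) - e' (m : ZMod n) = (e 0 : ℤ) - e' 0 := by
    intro m
    induction m with
    | zero => simp
    | succ m ih => push_cast; rw [h1, ih]
  have h3 : ∀ i, (e i : ℤ) - e' i = (e 0 : ℤ) - e' 0 := by
    intro i
    have := h2 i.val
    rwa [ZMod.natCast_zmod_val] at this
  have h4 : ∑ i, ((e i : ℤ) - e' i) = 0 := by
    rw [Finset.sum_sub_distrib]
    have : (∑ i, (e i : ℤ)) = ∑ i, (e' i : ℤ) := by exact_mod_cast hs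
    linarith
  simp only [h3, Finset.sum_const, Finset.card_univ, ZMod.card, nsmul_eq_mul] at h4
  have h5 : (e 0 : ℤ) - e' 0 = 0 := by
    rcases mul_eq_zero.1 h4 with h6 | h6
    · exact absurd (by exact_mod_cast h6) (NeZero.ne n)
    · exact h6
  funext i
  have := h3 i
  omega

lemma eq_Lam_of_sum_one (n : ℕ) [NeZero n] (f : ZMod n → ℤ) (h0 : ∀ i, 0 ≤ f i)
    (h1 : ∑ i, f i = 1) : ∃ t, f = Lam n t := by
  have : ∃ t, f t ≠ 0 := by
    by_contra hcon
    push Not at hcon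
    simp [hcon] at h1
  obtain ⟨t, ht⟩ := this
  have hsplit := Finset.add_sum_erase Finset.univ f (Finset.mem_univ t)
  have hrest : 0 ≤ ∑ i ∈ Finset.univ.erase t, f i := Finset.sum_nonneg fun i _ => h0 i
  have hpos : 1 ≤ f t := by have := h0 t; omega
  have hz : ∑ i ∈ Finset.univ.erase t, f i = 0 := by omega
  rw [Finset.sum_eq_zero_iff_of_nonneg fun i _ => h0 i] at hz
  refine ⟨t, funext fun i => ?_⟩
  unfold Lam
  split_ifs with h
  · subst h; omega
  · exact hz i (by simp [h])

lemma sum_Lam (n : ℕ) [NeZero n] (t : ZMod n) : ∑ i, Lam n t i = 1 := by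
  simp [Lam]

lemma sum_stepWt (n : ℕ) [NeZero n] (e : ZMod n → ℕ) : ∑ i, stepWt n e i = 0 := by
  unfold stepWt
  have h := Equiv.sum_comp (Equiv.subRight (1 : ZMod n)) (fun i => (e i : ℤ))
  simp only [Equiv.subRight_apply] at h
  rw [Finset.sum_sub_distrib, h, sub_self]

lemma sum_wtOf (n : ℕ) [NeZero n] {l : ℕ} (v : Fin l → ℕ) : ∑ i, wtOf n v i = l := by
  unfold wtOf
  rw [← Nat.cast_sum, ← Finset.card_eq_sum_card_fiberwise (f := fun j : Fin l => (v j : ZMod n))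
    (s := Finset.univ) (t := Finset.univ) (by intro x _; simp)]
  simp

/-- Every weight on a path has the total level. -/
lemma sum_path (n : ℕ) [NeZero n] {l : ℕ} (v : Fin l → ℕ) {q : ℕ → ZMod n → ℤ}
    (hq : IsPath n l (wtOf n v) q) (k : ℕ) : ∑ i, q k i = l := by
  obtain ⟨hs, K, hK⟩ := hq
  have hstep : ∀ k, ∑ i, q (k + 1) i = ∑ i, q k i := by
    intro k
    obtain ⟨e, -, he⟩ := hs k
    have h := sum_stepWt n e
    rw [← he, Finset.sum_sub_distrib] at h
    linarith
  have hadd : ∀ m, ∑ i, q (k + m) i = ∑ i, q k i := by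
    intro m
    induction m with
    | zero => rfl
    | succ m ih => rw [← add_assoc, hstep, ih]
  rw [← hadd K, hK (k + K) (by omega)]
  unfold gsp
  exact (Equiv.sum_comp (Equiv.subRight ((k + K : ℕ) : ZMod n)) (wtOf n v)).trans (sum_wtOf n v)

/-- A restricted path over a fundamental weight decomposes as `p_k = η̂_k + Λ_{t_k}`. -/
lemma exists_t (n : ℕ) [NeZero n] (u : ZMod n) {l : ℕ} {v : Fin l → ℕ} {p : ℕ → ZMod n → ℤ}
    (hp : IsRes n l (Lam n u) (wtOf n v) p) {lam : Fin l → ℕ → ℕ}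
    (hpi : IsPi n v lam (fun k i => p k i - Lam n u i)) (k : ℕ) :
    ∃ t, ∀ i, p k i = (eFun n v lam k i : ℤ) + Lam n t i := by
  obtain ⟨e, hes, hed, hle⟩ := hp.2 k
  have h1 : stepWt n e = stepWt n (eFun n v lam k) := by
    rw [← hed, ← hpi.1 k]
    funext i
    ring
  have h2 : e = eFun n v lam k := stepWt_inj n (by rw [hes, sum_eFun]) h1
  subst h2
  have hsum := sum_path n v hp.1 k
  rw [Finset.sum_sub_distrib, sum_Lam] at hsum
  obtain ⟨t, ht⟩ := eq_Lam_of_sum_one n (fun i => p k i - (eFun n v lam k i : ℤ))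
    (fun i => by have := hle i; linarith) (by
      rw [Finset.sum_sub_distrib, ← Nat.cast_sum, hes]; linarith)
  exact ⟨t, fun i => by have := congrFun ht i; linarith⟩

/-- if `l′ = 1` and `Λ′ = Λ_u`, then `♯λ ∈ 𝒴(♯Λ″, Λ_{-u})` is the single
partition obtained by collecting together all the rows of the components of `λ(p)`:
for each `k > 0` its number of parts equal to `k` is the total number of length-`k`
rows of `λ(p)`. -/
theorem sharp_level_one (n : ℕ) [NeZero n] (hn : 2 ≤ n) (u : ℕ) (hu : u < n) (l'' : ℕ)
    (v'' : Fin l'' → ℕ) (hv'' : SortedV n l'' v'')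
    (p : ℕ → ZMod n → ℤ)
    (hp : IsRes n l'' (Lam n (u : ZMod n)) (wtOf n v'') p)
    (lam : Fin l'' → ℕ → ℕ)
    (hlam : IsHL n v'' lam (fun k i => p k i - Lam n (u : ZMod n) i))
    (mu : Fin 1 → ℕ → ℕ)
    (hmu : IsHL n (fun _ : Fin 1 => (n - u) % n) mu
      (fun k i => sharpPath n p k i - sharpWt n (wtOf n v'') i)) :
    ∀ k : ℕ, 0 < k →
      Nat.card {i : ℕ // mu 0 i = k} = Nat.card {x : Fin l'' × ℕ // lam x.1 x.2 = k} := by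
  intro k hk
  have hpi := hlam.2.2.1
  choose t ht using exists_t n (u : ZMod n) hp hpi
  have hrec : ∀ k i, p (k + 1) i = (eFun n v'' lam k (i - 1) : ℤ) + Lam n (t k) i := by
    intro k i
    have h1 := congrFun (hpi.1 k) i
    simp only [stepWt] at h1
    have h2 := ht k i
    linarith
  have hmuP := hmu.1
  have hmuW : SortedV n 1 (fun _ : Fin 1 => (n - u) % n) :=
    ⟨fun _ _ _ => le_rfl, fun _ => Nat.mod_lt _ (by omega)⟩
  -- the steps of `♯p` are the step weights of `Λ_{k - t_k}`
  have hmuE : ∀ k, ((colW (fun _ : Fin 1 => (n - u) % n) mu (k + 1) 0 : ℤ) : ZMod n) = -t k := by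
    intro k
    have h1 : stepWt n (eFun n (fun _ : Fin 1 => (n - u) % n) mu k) =
        stepWt n (fun i => if i = (k : ZMod n) - t k then 1 else 0) := by
      rw [← hmu.2.2.1.1 k]
      funext i
      have h2 := hrec k (((k + 1 : ℕ) : ZMod n) - i)
      have h3 := ht k ((k : ZMod n) - i)
      have h4 : ((k + 1 : ℕ) : ZMod n) - i - 1 = (k : ZMod n) - i := by push_cast; ring
      rw [h4] at h2
      have e1 : ((k + 1 : ℕ) : ZMod n) - i = t k ↔ i - 1 = (k : ZMod n) - t k := by
        push_cast
        constructor <;> intro h <;> linear_combination -h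
      have e2 : (k : ZMod n) - i = t k ↔ i = (k : ZMod n) - t k := by
        constructor <;> intro h <;> linear_combination -h
      simp only [sharpPath, stepWt]
      rw [h2, h3]
      simp only [Lam, e1, e2]
      push_cast
      ring
    have h5 := stepWt_inj n (by rw [sum_eFun]; simp) h1
    have h6 := eFun_eq n (fun _ : Fin 1 => (n - u) % n) mu k ((k : ZMod n) - t k)
    rw [h5] at h6
    by_contra hcon
    rw [show (k : ZMod n) - t k - k = -t k by ring] at h6
    simp [resCount, Finset.filter_singleton, hcon] at h6
  have hlamH : ∀ i, resCount n (colW v'' lam k) i + Lam n (t (k - 1) - k) i =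
      resCount n (colW v'' lam (k + 1)) i + Lam n (t k - k) i := by
    intro i
    obtain ⟨m, rfl⟩ : ∃ m, k = m + 1 := ⟨k - 1, by omega⟩
    simp only [Nat.add_sub_cancel]
    have h1 := hrec m (i + ((m + 1 : ℕ) : ZMod n))
    rw [ht (m + 1), eFun_eq, eFun_eq] at h1
    rw [add_sub_cancel_right, show i + ((m + 1 : ℕ) : ZMod n) - 1 - m = i by push_cast; ring] at h1
    simp only [Lam, ← eq_sub_iff_add_eq] at h1 ⊢
    linarith
  have hb1 := highest_lift_bound n hv'' hlam hk _ _ hlamH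
  have hb2 := highest_lift_bound n hmuW hmu hk
    ((colW (fun _ : Fin 1 => (n - u) % n) mu (k + 1) 0 : ℤ) : ZMod n)
    ((colW (fun _ : Fin 1 => (n - u) % n) mu k 0 : ℤ) : ZMod n) (by
      intro i
      simp only [resCount, Lam, Finset.univ_unique, Finset.sum_singleton, Fin.default_eq_zero,
        eq_comm (a := i)]
      ring)
  -- weighting the residue identity by `i` and summing gives the row count modulo `n`
  have hmod : ((∑ j, (colW v'' lam (k + 1) j - colW v'' lam k j) : ℤ) : ZMod n) =
      t (k - 1) - t k := by
    have h1 := sum_mul_resCount n (colW v'' lam k)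
    have h2 := sum_mul_resCount n (colW v'' lam (k + 1))
    have hL : ∀ c : ZMod n, ∑ i : ZMod n, ((Lam n c i : ℤ) : ZMod n) * i = c := by
      intro c
      simp [Lam]
    have h3 : ∑ i : ZMod n, ((resCount n (colW v'' lam k) i + Lam n (t (k - 1) - k) i : ℤ) :
        ZMod n) * i = ∑ i : ZMod n, ((resCount n (colW v'' lam (k + 1)) i +
          Lam n (t k - k) i : ℤ) : ZMod n) * i :=
      Finset.sum_congr rfl fun i _ => by rw [hlamH]
    simp only [Int.cast_add, add_mul, Finset.sum_add_distrib, hL, h1, h2] at h3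
    rw [Finset.sum_sub_distrib, Int.cast_sub]
    linear_combination -h3
  have hmod2 : ((∑ j, (colW (fun _ : Fin 1 => (n - u) % n) mu (k + 1) j -
      colW (fun _ : Fin 1 => (n - u) % n) mu k j) : ℤ) : ZMod n) = t (k - 1) - t k := by
    have h1 := hmuE k
    have h2 := hmuE (k - 1)
    rw [Nat.sub_add_cancel hk] at h2
    simp only [Finset.univ_unique, Finset.sum_singleton, Fin.default_eq_zero]
    rw [Int.cast_sub, h1, h2]
    ring
  have hc1 := card_all_rows (v := v'') hlam.1 hk
  have hc2 := card_all_rows (v := fun _ : Fin 1 => (n - u) % n) hmuP hk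
  have hc3 : Nat.card {i : ℕ // mu 0 i = k} = Nat.card {x : Fin 1 × ℕ // mu x.1 x.2 = k} :=
    Nat.card_congr
      { toFun := fun x => ⟨(0, x.1), x.2⟩
        invFun := fun x => ⟨x.1.2, by have := x.2; rwa [Subsingleton.elim x.1.1 0] at this⟩
        left_inv := fun _ => rfl
        right_inv := fun x => by
          apply Subtype.ext
          exact Prod.ext (Subsingleton.elim _ _) rfl }
  rw [hc3]
  rw [← hc1] at hb1 hmod
  rw [← hc2] at hb2 hmod2
  have heq := hmod2.trans hmod.symm
  rw [Int.cast_natCast, Int.cast_natCast, ZMod.natCast_eq_natCast_iff'] at heq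
  rwa [Nat.mod_eq_of_lt (by exact_mod_cast hb2), Nat.mod_eq_of_lt (by exact_mod_cast hb1)] at heq

end BF
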